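/- Let (G,·,e) be a group with braiding operator r, written r(x,y) = (σ_x(y), γ_y(x)). Let Θ = (Θ₁,Θ₂) : G² → G² be a map such that the map F_Θ(g,h) := (σ_{Θ₁(g,h)}(g), σ_{Θ₂(g,h)}(h)) is a bijection of G², Θ₂(e,a) = e = Θ₁(a,e) for all a ∈ G, and for all a,b,c ∈ G the following hold in G: (Θ1) Θ₁(σ_{Θ₁(a·b,c)}(a), σ_{γ_a(Θ₁(a·b,c))}(b)) · Θ₁(a·b,c) = Θ₁(a,b·c); (Θ2) Θ₂(a·b,c) = Θ₂(σ_{Θ₂(a,b·c)}(b), σ_{γ_b(Θ₂(a,b·c))}(c)) · γ_b(Θ₂(a,b·c)); (Θ3) Θ₂(σ_{Θ₁(a·b,c)}(a), σ_{γ_a(Θ₁(a·b,c))}(b)) · γ_a(Θ₁(a·b,c)) = Θ₁(σ_{Θ₂(a,b·c)}(b), σ_{γ_b(Θ₂(a,b·c))}(c)) · Θ₂(a,b·c). Then (G, m∘F_Θ⁻¹, e) is a group (where m is the multiplication of G) and F_Θ∘r∘F_Θ⁻¹ is a braiding operator on it. -/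

import Mathlib

namespace BraceTwist

/-- Apply a map on `G × G` to the factors 1,2 of a triple: `f₁₂ = f × id`. -/
def E12 {G : Type*} (f : (G × G) ≃ (G × G)) : (G × G × G) ≃ (G × G × G) :=
  ((Equiv.prodAssoc G G G).symm.trans (f.prodCongr (Equiv.refl G))).trans
    (Equiv.prodAssoc G G G)

/-- Apply a map on `G × G` to the factors 2,3 of a triple: `f₂₃ = id × f`. -/
def E23 {G : Type*} (f : (G × G) ≃ (G × G)) : (G × G × G) ≃ (G × G × G) :=
  (Equiv.refl G).prodCongr f

/-- `m₁₂ : G³ → G²`, multiplying the first two factors. -/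
def M12 {G : Type*} (mul : G → G → G) : G × G × G → G × G :=
  fun p => (mul p.1 p.2.1, p.2.2)

/-- `m₂₃ : G³ → G²`, multiplying the last two factors. -/
def M23 {G : Type*} (mul : G → G → G) : G × G × G → G × G :=
  fun p => (p.1, mul p.2.1 p.2.2)

/-- `(mul, e, inv)` is a group structure on `G`. -/
structure IsGroup {G : Type*} (mul : G → G → G) (e : G) (inv : G → G) : Prop where
  mul_assoc : ∀ a b c, mul (mul a b) c = mul a (mul b c)
  one_mul : ∀ a, mul e a = a
  mul_one : ∀ a, mul a e = a
  inv_mul : ∀ a, mul (inv a) a = e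
  mul_inv : ∀ a, mul a (inv a) = e

/-- `r` is a braiding operator on the group `(G, mul, e)`. -/
structure IsBraidingOp {G : Type*} (mul : G → G → G) (e : G)
    (r : (G × G) ≃ (G × G)) : Prop where
  unit_left : ∀ g, r (e, g) = (g, e)
  unit_right : ∀ g, r (g, e) = (e, g)
  br1 : ∀ p : G × G × G, r (M12 mul p) = M23 mul (E12 r (E23 r p))
  br2 : ∀ p : G × G × G, r (M23 mul p) = M12 mul (E23 r (E12 r p))
  mul_r : ∀ p : G × G, mul (r p).1 (r p).2 = mul p.1 p.2

/-- A Drinfeld twist `(F, Φ, Ψ)` on the group with braiding operator `(G, mul, e, r)`. -/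
structure IsGrpTwist {G : Type*} (mul : G → G → G) (e : G)
    (r F : (G × G) ≃ (G × G)) (Φ Ψ : (G × G × G) ≃ (G × G × G)) : Prop where
  t1 : ∀ p, E12 F (Ψ p) = E23 F (Φ p)
  t2 : ∀ p, Φ (E23 r p) = E23 r (Φ p)
  t3 : ∀ p, Ψ (E12 r p) = E12 r (Ψ p)
  g1a : ∀ x y, Ψ (x, y, e) = (x, y, e)
  g1b : ∀ x y, Φ (e, x, y) = (e, x, y)
  g2a : ∀ x, F (e, x) = (e, x)
  g2b : ∀ x, F (x, e) = (x, e)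
  g3 : ∀ p : G × G × G, M23 mul (Φ p) = F (M23 mul p)
  g4 : ∀ p : G × G × G, M12 mul (Ψ p) = F (M12 mul p)

/-- The twisted map `F ∘ r ∘ F⁻¹`. -/
def twisted {G : Type*} (r F : (G × G) ≃ (G × G)) : (G × G) ≃ (G × G) :=
  (F.symm.trans r).trans F

/-- The twisted multiplication `m ∘ F⁻¹`. -/
def twistMul {G : Type*} (mul : G → G → G) (F : (G × G) ≃ (G × G)) : G → G → G :=
  fun x y => mul (F.symm (x, y)).1 (F.symm (x, y)).2

section Twist

variable {G : Type*} {mul : G → G → G} {e : G} {inv : G → G} {r F : (G × G) ≃ (G × G)}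

theorem twistMul_apply (p : G × G) :
    twistMul mul F (F p).1 (F p).2 = mul p.1 p.2 := by
  simp [twistMul]

theorem M12_twistMul (p : G × G × G) : M12 (twistMul mul F) (E12 F p) = M12 mul p := by
  simp [M12, E12, twistMul]

theorem M23_twistMul (p : G × G × G) : M23 (twistMul mul F) (E23 F p) = M23 mul p := by
  simp [M23, E23, twistMul]

theorem E12_twisted (p : G × G × G) : E12 (twisted r F) (E12 F p) = E12 F (E12 r p) := by
  simp [E12, twisted]

theorem E23_twisted (p : G × G × G) : E23 (twisted r F) (E23 F p) = E23 F (E23 r p) := by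
  simp [E23, twisted, Prod.map]

theorem twisted_apply (p : G × G) : twisted r F (F p) = F (r p) := by
  simp [twisted]

/-- Twisting a group with braiding operator yields a group with braiding operator. -/
theorem IsGrpTwist.isGroup_and_isBraidingOp {Φ Ψ : (G × G × G) ≃ (G × G × G)}
    (hG : IsGroup mul e inv) (hbr : IsBraidingOp mul e r) (h : IsGrpTwist mul e r F Φ Ψ) :
    (∃ inv' : G → G, IsGroup (twistMul mul F) e inv') ∧
      IsBraidingOp (twistMul mul F) e (twisted r F) := by
  have mul₁₂ (p : G × G × G) : M12 (twistMul mul F) (E23 F (Φ p)) = F (M12 mul p) := by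
    rw [← h.t1, M12_twistMul, h.g4]
  have mul₂₃ (p : G × G × G) : M23 (twistMul mul F) (E23 F (Φ p)) = F (M23 mul p) := by
    rw [M23_twistMul, h.g3]
  have braid₁₂ (p : G × G × G) :
      E12 (twisted r F) (E23 F (Φ p)) = E23 F (Φ (E12 r p)) := by
    rw [← h.t1, E12_twisted, ← h.t3, h.t1]
  have braid₂₃ (p : G × G × G) :
      E23 (twisted r F) (E23 F (Φ p)) = E23 F (Φ (E23 r p)) := by
    rw [E23_twisted, ← h.t2]
  have surj (q : G × G × G) : ∃ p, E23 F (Φ p) = q :=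
    (Φ.trans (E23 F)).surjective q
  have exists_inv (a : G) : ∃ b, twistMul mul F a b = e ∧ twistMul mul F b a = e := by
    have h₁ := mul₁₂ (a, inv a, a)
    have h₂ := mul₂₃ (a, inv a, a)
    simp only [M12, M23, hG.mul_inv, hG.inv_mul, h.g2a, h.g2b, Prod.mk.injEq] at h₁ h₂
    refine ⟨(E23 F (Φ (a, inv a, a))).2.1, ?_, ?_⟩
    · simpa only [h₂.1] using h₁.1
    · simpa only [h₁.2] using h₂.2
  refine ⟨?_, ?_, ?_, ?_, ?_, ?_⟩
  · choose inv' hinv' using exists_inv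
    refine ⟨inv', ?_, ?_, ?_, fun a => (hinv' a).2, fun a => (hinv' a).1⟩
    · intro a b c
      obtain ⟨p, hp⟩ := surj (a, b, c)
      have h₁ := mul₁₂ p
      have h₂ := mul₂₃ p
      rw [hp] at h₁ h₂
      have h₃ := congrArg (fun q : G × G => twistMul mul F q.1 q.2) h₁
      have h₄ := congrArg (fun q : G × G => twistMul mul F q.1 q.2) h₂
      simp only [twistMul_apply] at h₃ h₄
      exact h₃.trans ((hG.mul_assoc _ _ _).trans h₄.symm)
    · intro a
      simpa [h.g2a, hG.one_mul] using twistMul_apply (mul := mul) (F := F) (e, a)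
    · intro a
      simpa [h.g2b, hG.mul_one] using twistMul_apply (mul := mul) (F := F) (a, e)
  · intro g
    simpa [h.g2a, h.g2b, hbr.unit_left] using twisted_apply (r := r) (F := F) (e, g)
  · intro g
    simpa [h.g2a, h.g2b, hbr.unit_right] using twisted_apply (r := r) (F := F) (g, e)
  · intro q
    obtain ⟨p, rfl⟩ := surj q
    rw [mul₁₂, twisted_apply, braid₂₃, braid₁₂, mul₂₃, hbr.br1]
  · intro q
    obtain ⟨p, rfl⟩ := surj q
    rw [mul₂₃, twisted_apply, braid₁₂, braid₂₃, mul₁₂, hbr.br2]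
  · intro q
    obtain ⟨p, rfl⟩ := F.surjective q
    rw [twisted_apply, twistMul_apply, twistMul_apply, hbr.mul_r]

end Twist

section Components

variable {G : Type*} {mul : G → G → G} {e : G} {inv : G → G} {r : (G × G) ≃ (G × G)}
  {σ γ : G → G → G}

theorem IsGroup.mul_left_cancel (hG : IsGroup mul e inv) {a b c : G}
    (h : mul a b = mul a c) : b = c := by
  have := congrArg (mul (inv a)) h
  rwa [← hG.mul_assoc, ← hG.mul_assoc, hG.inv_mul, hG.one_mul, hG.one_mul] at this

theorem IsBraidingOp.mul_act (hbr : IsBraidingOp mul e r)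
    (hr : ∀ x y, r (x, y) = (σ x y, γ y x)) (a b c : G) :
    σ (mul a b) c = σ a (σ b c) := by
  have := hbr.br1 (a, b, c)
  simp only [M12, M23, E12, E23, hr, Equiv.trans_apply, Equiv.prodCongr_apply, Prod.map_apply,
    Equiv.refl_apply, Equiv.prodAssoc_apply, Equiv.prodAssoc_symm_apply, Prod.mk.injEq] at this
  exact this.1

theorem IsBraidingOp.act_mul (hbr : IsBraidingOp mul e r)
    (hr : ∀ x y, r (x, y) = (σ x y, γ y x)) (a b c : G) :
    σ a (mul b c) = mul (σ a b) (σ (γ b a) c) := by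
  have := hbr.br2 (a, b, c)
  simp only [M12, M23, E12, E23, hr, Equiv.trans_apply, Equiv.prodCongr_apply, Prod.map_apply,
    Equiv.refl_apply, Equiv.prodAssoc_apply, Equiv.prodAssoc_symm_apply, Prod.mk.injEq] at this
  exact this.1

theorem IsBraidingOp.one_act (hbr : IsBraidingOp mul e r)
    (hr : ∀ x y, r (x, y) = (σ x y, γ y x)) (a : G) : σ e a = a ∧ γ a e = e := by
  simpa [hr] using hbr.unit_left a

theorem IsBraidingOp.act_one (hbr : IsBraidingOp mul e r)
    (hr : ∀ x y, r (x, y) = (σ x y, γ y x)) (a : G) : σ a e = e := by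
  have := hbr.unit_right a
  rw [hr, Prod.mk.injEq] at this
  exact this.1

theorem IsBraidingOp.act_mul_eq (hbr : IsBraidingOp mul e r)
    (hr : ∀ x y, r (x, y) = (σ x y, γ y x)) (a b : G) : mul (σ a b) (γ b a) = mul a b := by
  simpa [hr] using hbr.mul_r (a, b)

theorem IsBraidingOp.act_bijective (hG : IsGroup mul e inv) (hbr : IsBraidingOp mul e r)
    (hr : ∀ x y, r (x, y) = (σ x y, γ y x)) (a : G) : Function.Bijective (σ a) := by
  refine Function.bijective_iff_has_inverse.2 ⟨σ (inv a), fun x => ?_, fun x => ?_⟩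
  · rw [← hbr.mul_act hr, hG.inv_mul, (hbr.one_act hr x).1]
  · rw [← hbr.mul_act hr, hG.mul_inv, (hbr.one_act hr x).1]

/-- The diagonal action of `G` on `G × G` commutes with the braiding operator. -/
theorem IsBraidingOp.diag_act_comm (hG : IsGroup mul e inv) (hbr : IsBraidingOp mul e r)
    (hr : ∀ x y, r (x, y) = (σ x y, γ y x)) (t b c : G) :
    (σ t (σ b c), σ (γ (σ b c) t) (γ c b)) = r (σ t b, σ (γ b t) c) := by
  have h₁ : σ t (σ b c) = σ (σ t b) (σ (γ b t) c) := by
    rw [← hbr.mul_act hr, ← hbr.mul_act hr, hbr.act_mul_eq hr]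
  rw [hr, Prod.mk.injEq]
  refine ⟨h₁, hG.mul_left_cancel (a := σ t (σ b c)) ?_⟩
  rw [← hbr.act_mul hr, hbr.act_mul_eq hr, h₁, hbr.act_mul_eq hr, hbr.act_mul hr]

end Components

theorem theta_cotwist_gives_brace {G : Type*} (mul : G → G → G) (e : G)
    (inv : G → G) (hG : IsGroup mul e inv)
    (r FΘ : (G × G) ≃ (G × G)) (σ γ : G → G → G) (Θ₁ Θ₂ : G → G → G)
    (hbr : IsBraidingOp mul e r)
    (hr : ∀ x y, r (x, y) = (σ x y, γ y x))
    (hFΘ : ∀ g h, FΘ (g, h) = (σ (Θ₁ g h) g, σ (Θ₂ g h) h))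
    (hΘe : ∀ a, Θ₂ e a = e ∧ Θ₁ a e = e)
    (hΘ1 : ∀ a b c, mul (Θ₁ (σ (Θ₁ (mul a b) c) a) (σ (γ a (Θ₁ (mul a b) c)) b))
        (Θ₁ (mul a b) c) = Θ₁ a (mul b c))
    (hΘ2 : ∀ a b c, Θ₂ (mul a b) c =
        mul (Θ₂ (σ (Θ₂ a (mul b c)) b) (σ (γ b (Θ₂ a (mul b c))) c))
          (γ b (Θ₂ a (mul b c))))
    (hΘ3 : ∀ a b c, mul (Θ₂ (σ (Θ₁ (mul a b) c) a) (σ (γ a (Θ₁ (mul a b) c)) b))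
        (γ a (Θ₁ (mul a b) c)) =
      mul (Θ₁ (σ (Θ₂ a (mul b c)) b) (σ (γ b (Θ₂ a (mul b c))) c))
        (Θ₂ a (mul b c))) :
    (∃ inv' : G → G, IsGroup (twistMul mul FΘ) e inv') ∧
    IsBraidingOp (twistMul mul FΘ) e (twisted r FΘ) := by
  let Φ₀ : G × G × G → G × G × G := fun p =>
    (σ (Θ₁ p.1 (mul p.2.1 p.2.2)) p.1, σ (Θ₂ p.1 (mul p.2.1 p.2.2)) p.2.1,
      σ (γ p.2.1 (Θ₂ p.1 (mul p.2.1 p.2.2))) p.2.2)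
  let Ψ₀ : G × G × G → G × G × G := fun p =>
    (σ (Θ₁ (mul p.1 p.2.1) p.2.2) p.1, σ (γ p.1 (Θ₁ (mul p.1 p.2.1) p.2.2)) p.2.1,
      σ (Θ₂ (mul p.1 p.2.1) p.2.2) p.2.2)
  have σ_bij := hbr.act_bijective hG hr
  have Φ₀_mul (p : G × G × G) : M23 mul (Φ₀ p) = FΘ (M23 mul p) := by
    simp only [Φ₀, M23, hFΘ, hbr.act_mul hr]
  have Ψ₀_mul (p : G × G × G) : M12 mul (Ψ₀ p) = FΘ (M12 mul p) := by
    simp only [Ψ₀, M12, hFΘ, hbr.act_mul hr]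
  have Φ₀_bij : Function.Bijective Φ₀ := by
    constructor
    · rintro ⟨a, b, c⟩ ⟨a', b', c'⟩ h
      have hM : M23 mul (a, b, c) = M23 mul (a', b', c') :=
        FΘ.injective (by rw [← Φ₀_mul, ← Φ₀_mul, h])
      simp only [M23, Prod.mk.injEq] at hM
      obtain ⟨rfl, hbc⟩ := hM
      simp only [Φ₀, Prod.mk.injEq, ← hbc] at h
      obtain rfl := (σ_bij _).injective h.2.1
      obtain rfl := (σ_bij _).injective h.2.2
      rfl
    · rintro ⟨x, y, z⟩
      obtain ⟨⟨a, d⟩, hd⟩ := FΘ.surjective (x, mul y z)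
      obtain ⟨b, hb⟩ := (σ_bij (Θ₂ a d)).surjective y
      obtain ⟨c, hc⟩ := (σ_bij (γ b (Θ₂ a d))).surjective z
      rw [hFΘ, Prod.mk.injEq] at hd
      have hbc : mul b c = d :=
        (σ_bij (Θ₂ a d)).injective (by rw [hbr.act_mul hr, hb, hc, hd.2])
      exact ⟨(a, b, c), by simp only [Φ₀, hbc, hb, hc, hd.1]⟩
  have compat (p : G × G × G) : E12 FΘ (Ψ₀ p) = E23 FΘ (Φ₀ p) := by
    obtain ⟨a, b, c⟩ := p
    simp only [Φ₀, Ψ₀, E12, E23, hFΘ, Equiv.trans_apply, Equiv.prodCongr_apply, Prod.map_apply,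
      Equiv.refl_apply, Equiv.prodAssoc_apply, Equiv.prodAssoc_symm_apply, ← hbr.mul_act hr,
      hΘ1, hΘ3, ← hΘ2]
  let Φ : (G × G × G) ≃ (G × G × G) := Equiv.ofBijective Φ₀ Φ₀_bij
  let Ψ : (G × G × G) ≃ (G × G × G) := (Φ.trans (E23 FΘ)).trans (E12 FΘ).symm
  have hΦ (p : G × G × G) : Φ p = Φ₀ p := rfl
  have hΨ (p : G × G × G) : Ψ p = Ψ₀ p :=
    (E12 FΘ).symm_apply_eq.2 (compat p).symm
  have one_act (a : G) : σ e a = a := (hbr.one_act hr a).1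
  refine IsGrpTwist.isGroup_and_isBraidingOp (Φ := Φ) (Ψ := Ψ) hG hbr
    ⟨?_, ?_, ?_, ?_, ?_, ?_, ?_, Φ₀_mul, ?_⟩
  · intro p
    rw [hΨ, hΦ, compat]
  · rintro ⟨a, b, c⟩
    simp only [hΦ, Φ₀, E23, Equiv.prodCongr_apply, Prod.map_apply, Equiv.refl_apply]
    rw [← hbr.diag_act_comm hG hr]
    simp only [hr, hbr.act_mul_eq hr]
  · rintro ⟨a, b, c⟩
    simp only [hΨ, Ψ₀, E12, Equiv.trans_apply, Equiv.prodCongr_apply, Prod.map_apply,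
      Equiv.refl_apply, Equiv.prodAssoc_apply, Equiv.prodAssoc_symm_apply]
    rw [← hbr.diag_act_comm hG hr]
    simp only [hr, hbr.act_mul_eq hr]
  · intro x y
    simp only [hΨ, Ψ₀, (hΘe _).2, (hbr.one_act hr _).2, one_act, hbr.act_one hr]
  · intro x y
    simp only [hΦ, Φ₀, (hΘe _).1, (hbr.one_act hr _).2, one_act, hbr.act_one hr]
  · intro x
    simp only [hFΘ, (hΘe _).1, one_act, hbr.act_one hr]
  · intro x
    simp only [hFΘ, (hΘe _).2, one_act, hbr.act_one hr]
  · intro p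
    rw [hΨ, Ψ₀_mul]

end BraceTwist
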